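/- Let L ∈ L_{2,2} be a quantum channel from 2×2 to 2×2 complex matrices. Then L is an extreme point of L_{2,2} if and only if either (1) there exists a unitary U ∈ ℂ^{2×2} with L(X) = U X U^* for all X (equivalently rank Z(L) = 1), or (2) rank Z(L) = 2 and there do not exist t ∈ (0,1) and unitary matrices U_1, U_2 ∈ ℂ^{2×2} with the channels X ↦ U_1 X U_1^* and X ↦ U_2 X U_2^* distinct and L(X) = t·U_1 X U_1^* + (1−t)·U_2 X U_2^* for all X. -/

import Mathlib

open Matrix
open scoped ComplexOrder

/-- The Choi matrix of a linear map `L` from `m × m` to `n × n` complex matrices: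
its `((i,p),(j,q))` entry is the `(p,q)` entry of `L(E_{ij})`. -/
def choi (m n : ℕ) (L : Matrix (Fin m) (Fin m) ℂ →ₗ[ℂ] Matrix (Fin n) (Fin n) ℂ) :
    Matrix (Fin m × Fin n) (Fin m × Fin n) ℂ :=
  Matrix.of fun ip jq => L (Matrix.single ip.1 jq.1 (1 : ℂ)) ip.2 jq.2

/-- `L` is a quantum channel: it admits a Kraus representation
`L(X) = ∑ Aᵢ X Aᵢ*` with `∑ Aᵢ* Aᵢ = I`. -/
def IsChannel (m n : ℕ) (L : Matrix (Fin m) (Fin m) ℂ →ₗ[ℂ] Matrix (Fin n) (Fin n) ℂ) : Prop :=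
  ∃ (k : ℕ) (A : Fin k → Matrix (Fin n) (Fin m) ℂ),
    (∀ X, L X = ∑ i, A i * X * (A i)ᴴ) ∧ ∑ i, (A i)ᴴ * A i = 1

/-- `L` is an extreme point of the convex set of quantum channels. -/
def IsExtremeChannel (m n : ℕ)
    (L : Matrix (Fin m) (Fin m) ℂ →ₗ[ℂ] Matrix (Fin n) (Fin n) ℂ) : Prop :=
  IsChannel m n L ∧
    ∀ L₁ L₂ : Matrix (Fin m) (Fin m) ℂ →ₗ[ℂ] Matrix (Fin n) (Fin n) ℂ,
      IsChannel m n L₁ → IsChannel m n L₂ → ∀ t : ℝ, 0 < t → t < 1 →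
      L = (t : ℂ) • L₁ + ((1 - t : ℝ) : ℂ) • L₂ → L₁ = L ∧ L₂ = L

/-!
Write `L` with linearly independent Kraus operators `A 0, ..., A (r - 1)`, where `r` is the rank of
the Choi matrix. Choi's criterion says that `L` is extreme exactly when the `r ^ 2` products
`(A j)ᴴ * A i` are linearly independent: a relation between them can be taken Hermitian, and then
perturbs `L` in both directions inside the set of channels, while any channel that takes part in a
decomposition of `L` has Kraus operators in the span of the `A i`. Counting dimensions, extremality
forces `r ≤ m`. If `r = 2` and `L` is not extreme, diagonalizing a Hermitian relation gives Kraus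
operators `B 0`, `B 1` of `L` with `d 0 • (B 0)ᴴ * B 0 + d 1 • (B 1)ᴴ * B 1 = 0`. Together with
`(B 0)ᴴ * B 0 + (B 1)ᴴ * B 1 = 1` this makes both products scalar, so `B 0` and `B 1` are multiples
of isometries and `L` is a mixture of two isometric conjugations.
-/

theorem exists_eq_smul_of_add_eq_of_smul_add_smul_eq_zero {K V : Type*} [Field K]
    [AddCommGroup V] [Module K V] {x y e : V} {d : Fin 2 → K} (he : e ≠ 0) (hd : d ≠ 0)
    (hadd : x + y = e) (hrel : d 0 • x + d 1 • y = 0) : ∃ s : K, x = s • e ∧ y = (1 - s) • e := by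
  obtain rfl : y = e - x := eq_sub_of_add_eq' hadd
  have hx : (d 1 - d 0) • x = d 1 • e := by
    rw [← sub_eq_zero, ← neg_eq_zero, ← hrel]
    module
  have hne : d 1 - d 0 ≠ 0 := fun h => hd <| by
    have h1 : d 1 = 0 := smul_eq_zero_iff_left he |>.1 (by rw [← hx, h, zero_smul])
    have h0 : d 0 = 0 := by simpa [h1] using h
    exact funext <| Fin.forall_fin_two.2 ⟨h0, h1⟩
  have hxs : x = (d 1 / (d 1 - d 0)) • e := by
    rw [div_eq_inv_mul, mul_smul, ← hx, inv_smul_smul₀ hne]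
  exact ⟨_, hxs, by rw [sub_smul, one_smul, ← hxs]⟩

section PosSemidef

variable {𝕜 ι κ μ : Type*} [RCLike 𝕜]

theorem exists_unitary_diagonalization [Fintype κ] [DecidableEq κ] {C : Matrix κ κ 𝕜}
    (hC : C.IsHermitian) :
    ∃ U ∈ unitaryGroup κ 𝕜, C = U * diagonal (fun i => (hC.eigenvalues i : 𝕜)) * Uᴴ :=
  ⟨hC.eigenvectorUnitary, hC.eigenvectorUnitary.2, hC.spectral_theorem⟩

theorem mul_right_injective_of_linearIndependent_col [Fintype ι] {V : Matrix μ ι 𝕜}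
    (hV : LinearIndependent 𝕜 V.col) : Function.Injective fun B : Matrix ι κ 𝕜 => V * B :=
  fun _ _ h => ext_col fun k => mulVec_injective_iff.2 hV congr(($h).col k)

theorem mul_mul_conjTranspose_injective [Fintype ι] {V : Matrix μ ι 𝕜}
    (hV : LinearIndependent 𝕜 V.col) :
    Function.Injective fun C : Matrix ι ι 𝕜 => V * C * Vᴴ := fun C D h => by
  have hcancel : C * Vᴴ = D * Vᴴ :=
    mul_right_injective_of_linearIndependent_col hV (by simpa only [Matrix.mul_assoc] using h)
  refine conjTranspose_injective (mul_right_injective_of_linearIndependent_col hV ?_)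
  simpa using congrArg conjTranspose hcancel

theorem submatrix_mul_conjTranspose_submatrix [Fintype ι] [Fintype κ] {V : Matrix μ κ 𝕜}
    {e : ι → κ} (he : Function.Injective e) (hV : ∀ k ∉ Set.range e, V.col k = 0) :
    V.submatrix id e * (V.submatrix id e)ᴴ = V * Vᴴ := by
  ext x y
  refine Fintype.sum_of_injective e he _ _ (fun k hk => ?_) fun _ => rfl
  have hx : V x k = 0 := congrFun (hV k hk) x
  simp [hx]

theorem exists_eq_mul_conjTranspose_of_posSemidef [Fintype κ] {Z : Matrix κ κ 𝕜}
    (hZ : Z.PosSemidef) : ∃ V : Matrix κ (Fin Z.rank) 𝕜, Z = V * Vᴴ := by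
  classical
  set ev := hZ.isHermitian.eigenvalues
  obtain ⟨U, -, hU⟩ := exists_unitary_diagonalization hZ.isHermitian
  obtain ⟨e⟩ : Nonempty (Fin Z.rank ≃ {i // ev i ≠ 0}) :=
    ⟨(Fintype.equivFinOfCardEq hZ.isHermitian.rank_eq_card_non_zero_eigs.symm).symm⟩
  let R : Matrix κ κ 𝕜 := diagonal fun i => (√(ev i) : 𝕜)
  have hR : R * Rᴴ = diagonal fun i => (ev i : 𝕜) := by
    simp only [R, diagonal_conjTranspose, diagonal_mul_diagonal, Pi.star_apply, RCLike.star_def,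
      RCLike.conj_ofReal, ← RCLike.ofReal_mul, Real.mul_self_sqrt (hZ.eigenvalues_nonneg _), ev]
  have hcol : ∀ k ∉ Set.range ((↑) ∘ e : Fin Z.rank → κ), (U * R).col k = 0 := fun k hk => by
    have hk0 : ev k = 0 := by
      by_contra h
      exact hk ⟨e.symm ⟨k, h⟩, by simp⟩
    ext x
    simp [R, hk0]
  refine ⟨(U * R).submatrix id ((↑) ∘ e), ?_⟩
  rw [submatrix_mul_conjTranspose_submatrix (Subtype.val_injective.comp e.injective) hcol,
    conjTranspose_mul, Matrix.mul_assoc, ← Matrix.mul_assoc R, hR, ← Matrix.mul_assoc]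
  exact hU

theorem exists_eq_mul_of_forall_vecMul_eq_zero {K : Type*} [Field K] [Fintype ι] [Fintype μ]
    {V : Matrix μ ι K} {W : Matrix μ κ K} (h : ∀ w, w ᵥ* V = 0 → w ᵥ* W = 0) :
    ∃ E : Matrix ι κ K, W = V * E := by
  classical
  have hcol : ∀ k, W.col k ∈ V.mulVecLin.range := fun k => by
    by_contra hk
    obtain ⟨φ, hφ, hle⟩ := Submodule.exists_le_ker_of_notMem hk
    obtain ⟨w, rfl⟩ := (dotProductEquiv K μ).surjective φ
    refine hφ (congrFun (h w ?_) k)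
    ext i
    exact hle (x := V.col i) ⟨Pi.single i 1, Matrix.mulVec_single_one V i⟩
  choose E hE using hcol
  exact ⟨(Matrix.of E)ᵀ, by ext x k; exact (congrFun (hE k) x).symm⟩

theorem dotProduct_mul_conjTranspose_mulVec_star [Fintype κ] [Fintype μ] (B : Matrix μ κ 𝕜)
    (w : μ → 𝕜) : w ⬝ᵥ (B * Bᴴ) *ᵥ star w = w ᵥ* B ⬝ᵥ star (w ᵥ* B) := by
  rw [← Matrix.mulVec_mulVec, Matrix.dotProduct_mulVec, Matrix.star_vecMul]

open scoped MatrixOrder in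
theorem exists_eq_mul_of_smul_mul_conjTranspose_le [Fintype ι] [Fintype κ] [Finite μ]
    {V : Matrix μ ι 𝕜} {W : Matrix μ κ 𝕜} {s : 𝕜} (hs : 0 < s)
    (h : s • (W * Wᴴ) ≤ V * Vᴴ) : ∃ E : Matrix ι κ 𝕜, W = V * E := by
  cases nonempty_fintype μ
  refine exists_eq_mul_of_forall_vecMul_eq_zero fun w hw => ?_
  have hle : s * (w ᵥ* W ⬝ᵥ star (w ᵥ* W)) ≤ s * 0 := by
    simpa [Matrix.sub_mulVec, Matrix.smul_mulVec, dotProduct_mul_conjTranspose_mulVec_star, hw]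
      using (Matrix.le_iff.1 h).dotProduct_mulVec_nonneg (star w)
  exact dotProduct_self_star_eq_zero.1 <|
    (le_of_mul_le_mul_left hle hs).antisymm (dotProduct_self_star_nonneg _)

open scoped MatrixOrder Matrix.Norms.L2Operator in
theorem posSemidef_one_sub_of_norm_le_one [Fintype κ] [DecidableEq κ] {C : Matrix κ κ ℂ}
    (hC : C.IsHermitian) (hnorm : ‖C‖ ≤ 1) : (1 - C).PosSemidef := by
  rw [← Matrix.le_iff]
  calc C ≤ algebraMap ℝ _ ‖C‖ := IsSelfAdjoint.le_algebraMap_norm_self hC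
    _ ≤ algebraMap ℝ _ 1 := algebraMap_mono _ hnorm
    _ = 1 := map_one _

end PosSemidef

section Kraus

variable {m n : ℕ} {ι κ : Type*}

/-- The matrix whose columns are the vectorized Kraus operators. -/
def krausMatrix (A : ι → Matrix (Fin n) (Fin m) ℂ) : Matrix (Fin m × Fin n) ι ℂ :=
  (Matrix.of fun i => vec (A i))ᵀ

theorem krausMatrix_bijective :
    Function.Bijective (krausMatrix : (ι → Matrix (Fin n) (Fin m) ℂ) → _) :=
  (transposeAddEquiv ι (Fin m × Fin n) ℂ).bijective.comp vec_bijective.comp_left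

theorem linearIndependent_col_krausMatrix {A : ι → Matrix (Fin n) (Fin m) ℂ} :
    LinearIndependent ℂ (krausMatrix A).col ↔ LinearIndependent ℂ A :=
  LinearMap.linearIndependent_iff
    (⟨⟨vec, vec_add⟩, vec_smul⟩ : Matrix (Fin n) (Fin m) ℂ →ₗ[ℂ] Fin m × Fin n → ℂ)
    (LinearMap.ker_eq_bot.2 vec_bijective.injective)

variable [Fintype ι]

/-- The recombined Kraus operators `∑ i, E i k • A i`. -/
def krausMix (A : ι → Matrix (Fin n) (Fin m) ℂ) (E : Matrix ι κ ℂ) (k : κ) :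
    Matrix (Fin n) (Fin m) ℂ :=
  ∑ i, E i k • A i

theorem krausMatrix_krausMix (A : ι → Matrix (Fin n) (Fin m) ℂ) (E : Matrix ι κ ℂ) :
    krausMatrix (krausMix A E) = krausMatrix A * E := by
  ext ⟨i, p⟩ k
  simp [krausMatrix, krausMix, Matrix.mul_apply, Matrix.sum_apply, mul_comm]

/-- The map `X ↦ ∑ C i j • A i X (A j)ᴴ`, linear in the coefficient matrix `C`. At `C = 1` it is
the map with Kraus operators `A`. -/
def krausForm (A : ι → Matrix (Fin n) (Fin m) ℂ) :
    Matrix ι ι ℂ →ₗ[ℂ] Matrix (Fin m) (Fin m) ℂ →ₗ[ℂ] Matrix (Fin n) (Fin n) ℂ :=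
  LinearMap.mk₂ ℂ (fun C X => ∑ i, ∑ j, C i j • (A i * X * (A j)ᴴ))
    (fun C D X => by simp only [Matrix.add_apply, add_smul, Finset.sum_add_distrib])
    (fun c C X => by simp only [Matrix.smul_apply, smul_assoc, Finset.smul_sum])
    (fun C X Y => by
      simp only [Matrix.mul_add, Matrix.add_mul, smul_add, Finset.sum_add_distrib])
    (fun c C X => by
      simp only [Matrix.mul_smul, Matrix.smul_mul, smul_comm c, Finset.smul_sum])

theorem krausForm_apply (A : ι → Matrix (Fin n) (Fin m) ℂ) (C : Matrix ι ι ℂ)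
    (X : Matrix (Fin m) (Fin m) ℂ) :
    krausForm A C X = ∑ i, ∑ j, C i j • (A i * X * (A j)ᴴ) := rfl

theorem krausForm_one_apply [DecidableEq ι] (A : ι → Matrix (Fin n) (Fin m) ℂ)
    (X : Matrix (Fin m) (Fin m) ℂ) : krausForm A 1 X = ∑ i, A i * X * (A i)ᴴ := by
  simp [krausForm_apply, Matrix.one_apply]

/-- The combination `∑ C i j • (A j)ᴴ A i`. It is `1` exactly when `krausForm A C` preserves the
trace, and it is injective in `C` exactly when the products `(A j)ᴴ A i` are linearly independent,
which is Choi's condition for extremality. -/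
def krausGram (A : ι → Matrix (Fin n) (Fin m) ℂ) :
    Matrix ι ι ℂ →ₗ[ℂ] Matrix (Fin m) (Fin m) ℂ where
  toFun C := ∑ i, ∑ j, C i j • ((A j)ᴴ * A i)
  map_add' C D := by simp only [Matrix.add_apply, add_smul, Finset.sum_add_distrib]
  map_smul' c C := by simp only [Matrix.smul_apply, smul_assoc, Finset.smul_sum, RingHom.id_apply]

theorem krausGram_apply (A : ι → Matrix (Fin n) (Fin m) ℂ) (C : Matrix ι ι ℂ) :
    krausGram A C = ∑ i, ∑ j, C i j • ((A j)ᴴ * A i) := rfl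

theorem krausGram_diagonal [DecidableEq ι] (A : ι → Matrix (Fin n) (Fin m) ℂ) (d : ι → ℂ) :
    krausGram A (diagonal d) = ∑ i, d i • ((A i)ᴴ * A i) := by
  simp [krausGram_apply, diagonal_apply]

theorem krausGram_one [DecidableEq ι] (A : ι → Matrix (Fin n) (Fin m) ℂ) :
    krausGram A 1 = ∑ i, (A i)ᴴ * A i := by
  simp only [← diagonal_one, krausGram_diagonal, one_smul]

theorem krausGram_conjTranspose (A : ι → Matrix (Fin n) (Fin m) ℂ) (C : Matrix ι ι ℂ) :
    krausGram A Cᴴ = (krausGram A C)ᴴ := by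
  simp only [krausGram_apply, conjTranspose_sum, conjTranspose_smul, conjTranspose_mul,
    conjTranspose_conjTranspose, conjTranspose_apply]
  exact Finset.sum_comm

theorem trace_krausForm (A : ι → Matrix (Fin n) (Fin m) ℂ) (C : Matrix ι ι ℂ)
    (X : Matrix (Fin m) (Fin m) ℂ) : (krausForm A C X).trace = (krausGram A C * X).trace := by
  simp only [krausForm_apply, krausGram_apply, Matrix.sum_mul, Matrix.smul_mul, trace_sum,
    trace_smul, Matrix.mul_assoc (A _)ᴴ, trace_mul_comm (A _)ᴴ]

theorem choi_krausForm (A : ι → Matrix (Fin n) (Fin m) ℂ) (C : Matrix ι ι ℂ) :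
    choi m n (krausForm A C) = krausMatrix A * C * (krausMatrix A)ᴴ := by
  ext ⟨i, p⟩ ⟨j, q⟩
  simp only [choi, krausMatrix, of_apply, krausForm_apply, Matrix.sum_apply, Matrix.smul_apply,
    Matrix.mul_apply, conjTranspose_apply, transpose_apply, vec, smul_eq_mul, Finset.sum_mul,
    Matrix.single_apply]
  rw [Finset.sum_comm]
  simp only [ite_and, mul_ite, mul_one, mul_zero, ite_mul, zero_mul, Finset.sum_ite_eq,
    Finset.mem_univ, ↓reduceIte]
  simp only [mul_left_comm, mul_assoc]

theorem choi_injective : Function.Injective (choi m n) := fun L M h =>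
  Matrix.ext_linearMap ℂ fun i j => LinearMap.ext_ring <| by
    ext p q
    exact congrFun (congrFun h (i, p)) (j, q)

theorem krausForm_injective {A : ι → Matrix (Fin n) (Fin m) ℂ} (hA : LinearIndependent ℂ A) :
    Function.Injective (krausForm A) := fun C D h =>
  mul_mul_conjTranspose_injective (linearIndependent_col_krausMatrix.2 hA) <| by
    simp only [← choi_krausForm, h]

theorem rank_choi_krausForm_one [DecidableEq ι] (A : ι → Matrix (Fin n) (Fin m) ℂ) :
    (choi m n (krausForm A 1)).rank = (krausMatrix A).rank := by
  rw [choi_krausForm, Matrix.mul_one, rank_self_mul_conjTranspose]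

theorem rank_choi_krausForm_one_le [DecidableEq ι] (A : ι → Matrix (Fin n) (Fin m) ℂ) :
    (choi m n (krausForm A 1)).rank ≤ Fintype.card ι :=
  (rank_choi_krausForm_one A).trans_le (rank_le_card_width _)

theorem linearIndependent_of_rank_choi_krausForm_one [DecidableEq ι]
    {A : ι → Matrix (Fin n) (Fin m) ℂ}
    (h : (choi m n (krausForm A 1)).rank = Fintype.card ι) : LinearIndependent ℂ A := by
  rw [← linearIndependent_col_krausMatrix, linearIndependent_iff_card_eq_finrank_span, ← h,
    rank_choi_krausForm_one, rank_eq_finrank_span_cols]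
  rfl

variable [Fintype κ]

theorem krausForm_krausMix (A : ι → Matrix (Fin n) (Fin m) ℂ) (E : Matrix ι κ ℂ)
    (C : Matrix κ κ ℂ) : krausForm (krausMix A E) C = krausForm A (E * C * Eᴴ) :=
  choi_injective <| by
    simp only [choi_krausForm, krausMatrix_krausMix, conjTranspose_mul, Matrix.mul_assoc]

theorem krausGram_congr {A : ι → Matrix (Fin n) (Fin m) ℂ} {B : κ → Matrix (Fin n) (Fin m) ℂ}
    {C : Matrix ι ι ℂ} {D : Matrix κ κ ℂ} (h : krausForm A C = krausForm B D) :
    krausGram A C = krausGram B D :=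
  Matrix.ext_iff_trace_mul_right.2 fun X => by rw [← trace_krausForm, h, trace_krausForm]

theorem krausGram_krausMix (A : ι → Matrix (Fin n) (Fin m) ℂ) (E : Matrix ι κ ℂ)
    (C : Matrix κ κ ℂ) : krausGram (krausMix A E) C = krausGram A (E * C * Eᴴ) :=
  krausGram_congr (krausForm_krausMix A E C)

end Kraus

section Channel

variable {m n : ℕ} {ι : Type*} [Fintype ι]
  {L : Matrix (Fin m) (Fin m) ℂ →ₗ[ℂ] Matrix (Fin n) (Fin n) ℂ}
  {A : ι → Matrix (Fin n) (Fin m) ℂ}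

theorem isChannel_iff_exists_krausForm_one :
    IsChannel m n L ↔ ∃ (k : ℕ) (A : Fin k → Matrix (Fin n) (Fin m) ℂ),
      L = krausForm A 1 ∧ krausGram A 1 = 1 := by
  simp only [IsChannel, LinearMap.ext_iff, krausForm_one_apply, krausGram_one]

theorem isChannel_krausForm {C : Matrix ι ι ℂ} (hC : C.PosSemidef) (hgram : krausGram A C = 1) :
    IsChannel m n (krausForm A C) := by
  obtain ⟨V, hV⟩ := exists_eq_mul_conjTranspose_of_posSemidef hC
  have hform : krausForm A C = krausForm (krausMix A V) 1 := by
    rw [krausForm_krausMix, Matrix.mul_one, ← hV]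
  exact isChannel_iff_exists_krausForm_one.2
    ⟨_, krausMix A V, hform, (krausGram_congr hform).symm.trans hgram⟩

variable [DecidableEq ι]

theorem isChannel_krausForm_one (hgram : krausGram A 1 = 1) : IsChannel m n (krausForm A 1) :=
  isChannel_krausForm PosSemidef.one hgram

theorem posSemidef_choi_krausForm_one (A : ι → Matrix (Fin n) (Fin m) ℂ) :
    (choi m n (krausForm A 1)).PosSemidef := by
  rw [choi_krausForm, Matrix.mul_one]
  exact posSemidef_self_mul_conjTranspose _

theorem IsChannel.posSemidef_choi (hL : IsChannel m n L) : (choi m n L).PosSemidef := by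
  obtain ⟨k, A, rfl, -⟩ := isChannel_iff_exists_krausForm_one.1 hL
  exact posSemidef_choi_krausForm_one A

theorem IsChannel.krausGram_eq_one (hL : IsChannel m n L) (h : L = krausForm A 1) :
    krausGram A 1 = 1 := by
  obtain ⟨k, B, hB, hgram⟩ := isChannel_iff_exists_krausForm_one.1 hL
  rw [← hgram, krausGram_congr (h.symm.trans hB)]

theorem IsChannel.exists_linearIndependent_eq_krausForm_one {r : ℕ} (hL : IsChannel m n L)
    (hr : (choi m n L).rank = r) :
    ∃ A : Fin r → Matrix (Fin n) (Fin m) ℂ, LinearIndependent ℂ A ∧ L = krausForm A 1 := by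
  subst hr
  obtain ⟨V, hV⟩ := exists_eq_mul_conjTranspose_of_posSemidef hL.posSemidef_choi
  obtain ⟨A, hA⟩ := krausMatrix_bijective.surjective V
  have hform : L = krausForm A 1 := choi_injective <| by
    rw [choi_krausForm, Matrix.mul_one, hA]
    exact hV
  refine ⟨A, linearIndependent_of_rank_choi_krausForm_one ?_, hform⟩
  rw [← hform, Fintype.card_fin]

theorem IsChannel.rank_choi_ne_zero [NeZero m] (hL : IsChannel m n L) :
    (choi m n L).rank ≠ 0 := fun hr => by
  obtain ⟨A, -, hA⟩ := hL.exists_linearIndependent_eq_krausForm_one hr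
  have hgram := hL.krausGram_eq_one hA
  simp [krausGram_one] at hgram

end Channel

section Extreme

variable {m n : ℕ} {ι : Type*} [Fintype ι]
  {L : Matrix (Fin m) (Fin m) ℂ →ₗ[ℂ] Matrix (Fin n) (Fin n) ℂ}
  {A : ι → Matrix (Fin n) (Fin m) ℂ}

theorem exists_isHermitian_krausGram_eq_zero (hA : ¬ Function.Injective (krausGram A)) :
    ∃ C : Matrix ι ι ℂ, C.IsHermitian ∧ C ≠ 0 ∧ krausGram A C = 0 := by
  obtain ⟨C, hC, hC0⟩ : ∃ C, krausGram A C = 0 ∧ C ≠ 0 := by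
    simpa [injective_iff_map_eq_zero] using hA
  have hCstar : krausGram A (star C) = 0 := by
    rw [star_eq_conjTranspose, krausGram_conjTranspose, hC, conjTranspose_zero]
  by_cases hre : (realPart C : Matrix ι ι ℂ) = 0
  · refine ⟨imaginaryPart C, (imaginaryPart C).2, fun him => hC0 ?_, ?_⟩
    · rw [← realPart_add_I_smul_imaginaryPart C, hre, him, smul_zero, add_zero]
    · simp [imaginaryPart_apply_coe, hC, hCstar, LinearMap.map_smul_of_tower]
  · refine ⟨realPart C, (realPart C).2, hre, ?_⟩
    simp [realPart_apply_coe, hC, hCstar, LinearMap.map_smul_of_tower]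

variable [DecidableEq ι]

open scoped MatrixOrder in
theorem exists_krausMix_of_smul_choi_le {κ : Type*} [Fintype κ] [DecidableEq κ]
    {B : κ → Matrix (Fin n) (Fin m) ℂ} {s : ℂ} (hs : 0 < s)
    (h : s • choi m n (krausForm B 1) ≤ choi m n (krausForm A 1)) :
    ∃ E : Matrix ι κ ℂ, B = krausMix A E := by
  simp only [choi_krausForm, Matrix.mul_one] at h
  obtain ⟨E, hE⟩ := exists_eq_mul_of_smul_mul_conjTranspose_le hs h
  exact ⟨E, krausMatrix_bijective.injective (hE.trans (krausMatrix_krausMix A E).symm)⟩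

open scoped MatrixOrder in
theorem IsChannel.eq_krausForm_one_of_smul_choi_le (hL : IsChannel m n L) {s : ℂ} (hs : 0 < s)
    (hA : Function.Injective (krausGram A)) (hgram : krausGram A 1 = 1)
    (h : s • choi m n L ≤ choi m n (krausForm A 1)) : L = krausForm A 1 := by
  obtain ⟨k, B, rfl, hB⟩ := isChannel_iff_exists_krausForm_one.1 hL
  obtain ⟨E, rfl⟩ := exists_krausMix_of_smul_choi_le hs h
  rw [krausGram_krausMix, ← hgram] at hB
  rw [krausForm_krausMix, hA hB]

open scoped MatrixOrder in
theorem isExtremeChannel_krausForm_one (hA : Function.Injective (krausGram A))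
    (hgram : krausGram A 1 = 1) : IsExtremeChannel m n (krausForm A 1) := by
  refine ⟨isChannel_krausForm_one hgram, fun L₁ L₂ h₁ h₂ t ht0 ht1 h => ?_⟩
  have ht : (0 : ℂ) < t := by exact_mod_cast ht0
  have ht' : (0 : ℂ) < ((1 - t : ℝ) : ℂ) := by exact_mod_cast sub_pos.2 ht1
  have hchoi : choi m n (krausForm A 1) =
      (t : ℂ) • choi m n L₁ + ((1 - t : ℝ) : ℂ) • choi m n L₂ := congrArg (choi m n) h
  have hnn₁ := (h₁.posSemidef_choi.smul ht.le).nonneg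
  have hnn₂ := (h₂.posSemidef_choi.smul ht'.le).nonneg
  exact ⟨h₁.eq_krausForm_one_of_smul_choi_le ht hA hgram (hchoi ▸ le_add_of_nonneg_right hnn₂),
    h₂.eq_krausForm_one_of_smul_choi_le ht' hA hgram (hchoi ▸ le_add_of_nonneg_left hnn₁)⟩

open scoped Matrix.Norms.L2Operator in
theorem IsExtremeChannel.injective_krausGram (hext : IsExtremeChannel m n (krausForm A 1))
    (hA : LinearIndependent ℂ A) : Function.Injective (krausGram A) := by
  by_contra hinj
  obtain ⟨C, hC, hC0, hgramC⟩ := exists_isHermitian_krausGram_eq_zero hinj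
  have hgram : krausGram A 1 = 1 := hext.1.krausGram_eq_one rfl
  set D : Matrix ι ι ℂ := ‖C‖⁻¹ • C with hD
  have hDherm : D.IsHermitian := IsSelfAdjoint.smul (IsSelfAdjoint.all _) hC
  have hDnorm : ‖D‖ ≤ 1 := by
    rw [hD, norm_smul, norm_inv, norm_norm]
    exact inv_mul_le_one
  have hgramD : krausGram A D = 0 := by
    rw [hD, LinearMap.map_smul_of_tower, hgramC, smul_zero]
  have h₁ : IsChannel m n (krausForm A (1 - D)) :=
    isChannel_krausForm (posSemidef_one_sub_of_norm_le_one hDherm hDnorm) <| by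
      rw [map_sub, hgram, hgramD, sub_zero]
  have h₂ : IsChannel m n (krausForm A (1 - -D)) :=
    isChannel_krausForm (posSemidef_one_sub_of_norm_le_one hDherm.neg (by rwa [norm_neg])) <| by
      rw [map_sub, map_neg, hgram, hgramD, neg_zero, sub_zero]
  have hmid : krausForm A 1 = ((1 / 2 : ℝ) : ℂ) • krausForm A (1 - D) +
      ((1 - 1 / 2 : ℝ) : ℂ) • krausForm A (1 - -D) := by
    simp only [map_sub, map_neg]
    push_cast
    module
  have hD0 : 1 - D = 1 := krausForm_injective hA
    (hext.2 _ _ h₁ h₂ (1 / 2) (by norm_num) (by norm_num) hmid).1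
  exact smul_ne_zero (inv_ne_zero (norm_ne_zero_iff.2 hC0)) hC0 (sub_eq_self.1 hD0)

theorem IsExtremeChannel.rank_choi_le (hext : IsExtremeChannel m n L) :
    (choi m n L).rank ≤ m := by
  generalize hr : (choi m n L).rank = r
  obtain ⟨A, hA, rfl⟩ := hext.1.exists_linearIndependent_eq_krausForm_one hr
  have hdim := LinearMap.finrank_le_finrank_of_injective (hext.injective_krausGram hA)
  simp only [Module.finrank_matrix, Fintype.card_fin, Module.finrank_self, mul_one] at hdim
  exact Nat.mul_self_le_mul_self_iff.1 hdim

theorem exists_krausForm_one_eq_and_sum_smul_eq_zero (hA : ¬ Function.Injective (krausGram A)) :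
    ∃ (B : ι → Matrix (Fin n) (Fin m) ℂ) (d : ι → ℝ), krausForm B 1 = krausForm A 1 ∧
      d ≠ 0 ∧ ∑ i, d i • ((B i)ᴴ * B i) = 0 := by
  obtain ⟨C, hC, hC0, hgram⟩ := exists_isHermitian_krausGram_eq_zero hA
  obtain ⟨U, hU, hUC⟩ := exists_unitary_diagonalization hC
  refine ⟨krausMix A U, hC.eigenvalues, ?_, mt hC.eigenvalues_eq_zero_iff.1 hC0, ?_⟩
  · rw [krausForm_krausMix, Matrix.mul_one, ← star_eq_conjTranspose, mem_unitaryGroup_iff.1 hU]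
  · rw [hUC, ← krausGram_krausMix, krausGram_diagonal] at hgram
    exact hgram

end Extreme

section Isometry

variable {m n : ℕ} {L : Matrix (Fin m) (Fin m) ℂ →ₗ[ℂ] Matrix (Fin n) (Fin n) ℂ}
  {U : Matrix (Fin n) (Fin m) ℂ}

theorem krausForm_unit_one_apply (U : Matrix (Fin n) (Fin m) ℂ) (X : Matrix (Fin m) (Fin m) ℂ) :
    krausForm (fun _ : Unit => U) 1 X = U * X * Uᴴ := by
  rw [krausForm_one_apply, Fintype.sum_unique]

theorem eq_krausForm_unit_one_iff :
    L = krausForm (fun _ : Unit => U) 1 ↔ ∀ X, L X = U * X * Uᴴ := by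
  simp only [LinearMap.ext_iff, krausForm_unit_one_apply]

theorem krausGram_unit (U : Matrix (Fin n) (Fin m) ℂ) (C : Matrix Unit Unit ℂ) :
    krausGram (fun _ : Unit => U) C = C () () • (Uᴴ * U) := by
  simp [krausGram_apply]

theorem isChannel_krausForm_unit_one (hU : Uᴴ * U = 1) :
    IsChannel m n (krausForm (fun _ : Unit => U) 1) :=
  isChannel_krausForm_one <| by rw [krausGram_unit, hU, one_apply_eq, one_smul]

theorem isExtremeChannel_of_forall_eq_conj [NeZero m] (hU : Uᴴ * U = 1)
    (h : ∀ X, L X = U * X * Uᴴ) : IsExtremeChannel m n L := by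
  rw [eq_krausForm_unit_one_iff.2 h]
  refine isExtremeChannel_krausForm_one (fun C D hCD => ?_) ?_
  · simp only [krausGram_unit, hU] at hCD
    ext
    exact smul_left_injective ℂ one_ne_zero hCD
  · rw [krausGram_unit, hU, one_apply_eq, one_smul]

theorem IsChannel.exists_isometry_of_rank_choi_eq_one (hL : IsChannel m n L)
    (hr : (choi m n L).rank = 1) :
    ∃ U : Matrix (Fin n) (Fin m) ℂ, Uᴴ * U = 1 ∧ ∀ X, L X = U * X * Uᴴ := by
  obtain ⟨A, -, hA⟩ := hL.exists_linearIndependent_eq_krausForm_one hr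
  have hgram := hL.krausGram_eq_one hA
  refine ⟨A 0, by simpa [krausGram_one] using hgram, fun X => ?_⟩
  rw [hA, krausForm_one_apply, Fintype.sum_unique]
  rfl

theorem rank_choi_le_one_of_forall_eq_conj (h : ∀ X, L X = U * X * Uᴴ) :
    (choi m n L).rank ≤ 1 := by
  rw [eq_krausForm_unit_one_iff.2 h]
  exact rank_choi_krausForm_one_le _

theorem exists_isometry_smul_of_conjTranspose_mul_self_eq_smul_one {μ ι : Type*} [Fintype μ]
    [DecidableEq ι] {B : Matrix μ ι ℂ} (hB : B ≠ 0) {s : ℝ} (h : Bᴴ * B = s • 1) :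
    0 < s ∧ ∃ U : Matrix μ ι ℂ, Uᴴ * U = 1 ∧ B = √s • U := by
  obtain ⟨i, hi⟩ : ∃ i, B.col i ≠ 0 := by
    by_contra! hcol
    exact hB (ext_col hcol)
  have hs : 0 < s := by
    have hpos : 0 < (Bᴴ * B) i i := dotProduct_star_self_pos_iff.2 hi
    rw [h] at hpos
    simpa using hpos
  have hsq : √s ≠ 0 := (Real.sqrt_pos.2 hs).ne'
  refine ⟨hs, (√s)⁻¹ • B, ?_, (smul_inv_smul₀ hsq B).symm⟩
  rw [conjTranspose_smul, star_trivial, Matrix.smul_mul, Matrix.mul_smul, h, smul_smul, smul_smul,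
    ← mul_inv, Real.mul_self_sqrt hs.le, inv_mul_cancel₀ hs.ne', one_smul]

end Isometry

section Mixture

variable {m n : ℕ} {L : Matrix (Fin m) (Fin m) ℂ →ₗ[ℂ] Matrix (Fin n) (Fin n) ℂ}

/-- `L` is a proper convex combination of two distinct conjugations by isometries. -/
def IsProperIsometryMixture (L : Matrix (Fin m) (Fin m) ℂ →ₗ[ℂ] Matrix (Fin n) (Fin n) ℂ) : Prop :=
  ∃ (t : ℝ) (U₁ U₂ : Matrix (Fin n) (Fin m) ℂ),
    0 < t ∧ t < 1 ∧ U₁ᴴ * U₁ = 1 ∧ U₂ᴴ * U₂ = 1 ∧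
    (∃ X : Matrix (Fin m) (Fin m) ℂ, U₁ * X * U₁ᴴ ≠ U₂ * X * U₂ᴴ) ∧
    ∀ X, L X = (t : ℂ) • (U₁ * X * U₁ᴴ) + ((1 - t : ℝ) : ℂ) • (U₂ * X * U₂ᴴ)

theorem IsExtremeChannel.not_isProperIsometryMixture (hext : IsExtremeChannel m n L) :
    ¬ IsProperIsometryMixture L := by
  rintro ⟨t, U₁, U₂, ht0, ht1, hU₁, hU₂, ⟨X, hX⟩, hmix⟩
  obtain ⟨h₁, h₂⟩ := hext.2 _ _ (isChannel_krausForm_unit_one hU₁)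
    (isChannel_krausForm_unit_one hU₂) t ht0 ht1 <| LinearMap.ext fun Y => by
      simpa only [LinearMap.add_apply, LinearMap.smul_apply,
        krausForm_unit_one_apply] using hmix Y
  apply hX
  rw [← krausForm_unit_one_apply, ← krausForm_unit_one_apply, h₁, h₂]

theorem IsChannel.isProperIsometryMixture_of_not_isExtremeChannel [NeZero m]
    (hL : IsChannel m n L) (hr : (choi m n L).rank = 2) (hext : ¬ IsExtremeChannel m n L) :
    IsProperIsometryMixture L := by
  obtain ⟨A, -, rfl⟩ := hL.exists_linearIndependent_eq_krausForm_one hr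
  have hinj : ¬ Function.Injective (krausGram A) := fun h =>
    hext (isExtremeChannel_krausForm_one h (hL.krausGram_eq_one rfl))
  obtain ⟨B, d, hB, hd, hrel⟩ := exists_krausForm_one_eq_and_sum_smul_eq_zero hinj
  rw [← hB] at hL hr ⊢
  have hB0 : ∀ i, B i ≠ 0 := (linearIndependent_of_rank_choi_krausForm_one hr).ne_zero
  have hadd : (B 0)ᴴ * B 0 + (B 1)ᴴ * B 1 = 1 := by
    rw [← hL.krausGram_eq_one rfl, krausGram_one, Fin.sum_univ_two]
  rw [Fin.sum_univ_two] at hrel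
  obtain ⟨s, h₀, h₁⟩ := exists_eq_smul_of_add_eq_of_smul_add_smul_eq_zero one_ne_zero hd hadd hrel
  obtain ⟨hs, U₁, hU₁, hBU₁⟩ :=
    exists_isometry_smul_of_conjTranspose_mul_self_eq_smul_one (hB0 0) h₀
  obtain ⟨hs', U₂, hU₂, hBU₂⟩ :=
    exists_isometry_smul_of_conjTranspose_mul_self_eq_smul_one (hB0 1) h₁
  have hmix : ∀ X, krausForm B 1 X =
      (s : ℂ) • (U₁ * X * U₁ᴴ) + ((1 - s : ℝ) : ℂ) • (U₂ * X * U₂ᴴ) := fun X => by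
    simp only [krausForm_one_apply, Fin.sum_univ_two, hBU₁, hBU₂, conjTranspose_smul, star_trivial,
      Matrix.smul_mul, Matrix.mul_smul, smul_smul, Real.mul_self_sqrt hs.le,
      Real.mul_self_sqrt hs'.le, Complex.coe_smul]
  refine ⟨s, U₁, U₂, hs, sub_pos.1 hs', hU₁, hU₂, ?_, hmix⟩
  by_contra! hcon
  have hle : (choi m n (krausForm B 1)).rank ≤ 1 := rank_choi_le_one_of_forall_eq_conj fun X => by
    rw [hmix, ← hcon, ← add_smul, ← Complex.ofReal_add, add_sub_cancel, Complex.ofReal_one,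
      one_smul]
  exact absurd hr (by omega)

end Mixture

theorem stmt18_general {m n : ℕ} [NeZero m]
    (L : Matrix (Fin m) (Fin m) ℂ →ₗ[ℂ] Matrix (Fin n) (Fin n) ℂ) (hL : IsChannel m n L) :
    IsExtremeChannel m n L ∧ (choi m n L).rank ≤ 2 ↔
      (∃ U : Matrix (Fin n) (Fin m) ℂ, Uᴴ * U = 1 ∧ ∀ X, L X = U * X * Uᴴ) ∨
        ((choi m n L).rank = 2 ∧ ¬ IsProperIsometryMixture L) := by
  constructor
  · rintro ⟨hext, hle⟩
    have hne := hL.rank_choi_ne_zero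
    obtain hr | hr : (choi m n L).rank = 1 ∨ (choi m n L).rank = 2 := by omega
    · exact .inl (hL.exists_isometry_of_rank_choi_eq_one hr)
    · exact .inr ⟨hr, hext.not_isProperIsometryMixture⟩
  · rintro (⟨U, hU, hLU⟩ | ⟨hr, hmix⟩)
    · exact ⟨isExtremeChannel_of_forall_eq_conj hU hLU,
        (rank_choi_le_one_of_forall_eq_conj hLU).trans one_le_two⟩
    · exact ⟨by_contra fun h => hmix
        (hL.isProperIsometryMixture_of_not_isExtremeChannel hr h), hr.le⟩

/-- `L ∈ L_{2,2}` is extreme iff either it is a unitary conjugation, or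
`rank Z(L) = 2` and `L` is not a proper convex combination of two distinct unitary
conjugations. -/
theorem stmt18 (L : Matrix (Fin 2) (Fin 2) ℂ →ₗ[ℂ] Matrix (Fin 2) (Fin 2) ℂ)
    (hL : IsChannel 2 2 L) :
    IsExtremeChannel 2 2 L ↔
      ((∃ U : Matrix (Fin 2) (Fin 2) ℂ, Uᴴ * U = 1 ∧ ∀ X, L X = U * X * Uᴴ) ∨
       ((choi 2 2 L).rank = 2 ∧
        ¬ ∃ (t : ℝ) (U₁ U₂ : Matrix (Fin 2) (Fin 2) ℂ),
          0 < t ∧ t < 1 ∧ U₁ᴴ * U₁ = 1 ∧ U₂ᴴ * U₂ = 1 ∧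
          (∃ X : Matrix (Fin 2) (Fin 2) ℂ, U₁ * X * U₁ᴴ ≠ U₂ * X * U₂ᴴ) ∧
          ∀ X, L X = (t : ℂ) • (U₁ * X * U₁ᴴ) + ((1 - t : ℝ) : ℂ) • (U₂ * X * U₂ᴴ))) :=
  (and_iff_left_of_imp IsExtremeChannel.rank_choi_le).symm.trans (stmt18_general L hL)
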